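/- arXiv:2510.07753 — 2 statements merged into one kernel-verified Lean document; each statement's English description precedes it below -/
import Mathlib

section
/- Let n ≥ 3 be odd and let Γ be an access structure on n players satisfying monotonicity, no-cloning and no-redundancy. If the minimum of |A| over all A ∈ Γ_min equals (n+1)/2, then Γ is the (n+1)/2-threshold structure, i.e. Γ_min is exactly the family of all subsets of {1,…,n} of size (n+1)/2. -/
open Finset

/-- Monotonicity of an access structure on `n` players (players = `Fin n`). -/
def Monotonic {n : ℕ} (Γ : Finset (Fin n) → Prop) : Prop :=
  ∀ A B : Finset (Fin n), Γ A → A ⊆ B → Γ B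

/-- No-cloning: a set is authorized iff its complement is not. -/
def NoCloning {n : ℕ} (Γ : Finset (Fin n) → Prop) : Prop :=
  ∀ A : Finset (Fin n), Γ A ↔ ¬ Γ Aᶜ

/-- `A` is a minimal authorized set of `Γ`. -/
def IsMinimal {n : ℕ} (Γ : Finset (Fin n) → Prop) (A : Finset (Fin n)) : Prop :=
  Γ A ∧ ∀ B : Finset (Fin n), B ⊂ A → ¬ Γ B

/-- No-redundancy: every player lies in some minimal authorized set. -/
def NoRedundancy {n : ℕ} (Γ : Finset (Fin n) → Prop) : Prop :=
  ∀ i : Fin n, ∃ A : Finset (Fin n), IsMinimal Γ A ∧ i ∈ A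

noncomputable section

/-- Combine an assignment on `A` and one on `Aᶜ` into a full bit string. -/
def glue {m : ℕ} (A : Finset (Fin m)) (u : {x // x ∈ A} → Fin 2)
    (w : {x // x ∈ Aᶜ} → Fin 2) : Fin m → Fin 2 :=
  fun x => if h : x ∈ A then u ⟨x, h⟩ else w ⟨x, Finset.mem_compl.mpr h⟩

/-- Reduced density matrix of the pure state `ψ` on the qubit positions in `A`:
the partial trace over the positions outside `A` of `ψψ†`. -/
def reducedDensity {m : ℕ} (ψ : (Fin m → Fin 2) → ℂ) (A : Finset (Fin m)) :
    Matrix ({x // x ∈ A} → Fin 2) ({x // x ∈ A} → Fin 2) ℂ :=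
  fun u v => ∑ w : {x // x ∈ Aᶜ} → Fin 2,
    ψ (glue A u w) * (starRingEnd ℂ) (ψ (glue A v w))

/-- The reduction of `ψ` to `A` is maximally mixed, i.e. equals `2^{-|A|} · I`. -/
def MaximallyMixed {m : ℕ} (ψ : (Fin m → Fin 2) → ℂ) (A : Finset (Fin m)) : Prop :=
  reducedDensity ψ A =
    ((2 : ℂ) ^ A.card)⁻¹ •
      (1 : Matrix ({x // x ∈ A} → Fin 2) ({x // x ∈ A} → Fin 2) ℂ)

open Classical in
/-- Von Neumann entropy (natural logarithm): sum of `-λ log λ` over the eigenvalues. -/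
def vnEntropy {ι : Type} [Fintype ι] [DecidableEq ι] (ρ : Matrix ι ι ℂ) : ℝ :=
  if h : ρ.IsHermitian then ∑ i, Real.negMulLog (h.eigenvalues i) else 0

/-- Entropy of the reduction of `ψ` to the set `A` of qubit positions. -/
def Sent {m : ℕ} (ψ : (Fin m → Fin 2) → ℂ) (A : Finset (Fin m)) : ℝ :=
  vnEntropy (reducedDensity ψ A)

/-- The qubit positions (in `{0,1,…,n} = Fin (n+1)`, where `0` is the reference qubit)
of a set of players `A ⊆ Fin n`: player `i` holds position `i.succ`. -/
def posOf {n : ℕ} (A : Finset (Fin n)) : Finset (Fin (n + 1)) := A.image Fin.succ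

/-- `ψ` is a pure QSS state for the access structure `Γ`: a normalized pure state of
`n+1` qubits (position `0` being the reference qubit `R`) satisfying Recoverability
`S(R) + S(A) - S(R ∪ A) = 2 log 2` for authorized `A` and Secrecy
`S(R) + S(B) - S(R ∪ B) = 0` for unauthorized `B`. -/
structure IsPureQSSState {n : ℕ} (Γ : Finset (Fin n) → Prop)
    (ψ : (Fin (n + 1) → Fin 2) → ℂ) : Prop where
  normalized : ∑ x : Fin (n + 1) → Fin 2, ‖ψ x‖ ^ 2 = 1
  recover : ∀ A : Finset (Fin n), Γ A →
    Sent ψ {0} + Sent ψ (posOf A) - Sent ψ (insert 0 (posOf A)) = 2 * Real.log 2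
  secrecy : ∀ B : Finset (Fin n), ¬ Γ B →
    Sent ψ {0} + Sent ψ (posOf B) - Sent ψ (insert 0 (posOf B)) = 0

end

/-!
Every authorized set contains a minimal one, so no authorized set has fewer than `(n + 1) / 2`
players. Since `n` is odd, a set with at least `(n + 1) / 2` players has a complement below this
bound, which is therefore unauthorized, so by no-cloning the set itself is authorized. Hence being
authorized depends on cardinality alone.
-/

section AccessStructure

variable {n k : ℕ} {Γ : Finset (Fin n) → Prop} {A : Finset (Fin n)}

theorem isMinimal_iff_minimal : IsMinimal Γ A ↔ Minimal Γ A :=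
  minimal_iff_forall_lt.symm

theorem exists_isMinimal_subset (hA : Γ A) : ∃ B ⊆ A, IsMinimal Γ B := by
  simpa only [isMinimal_iff_minimal] using exists_minimal_le_of_wellFoundedLT Γ A hA

theorem le_card_of_forall_isMinimal_le_card (hmin : ∀ B, IsMinimal Γ B → k ≤ #B) (hA : Γ A) :
    k ≤ #A := by
  obtain ⟨B, hBA, hB⟩ := exists_isMinimal_subset hA
  exact (hmin B hB).trans (card_le_card hBA)

theorem NoCloning.authorized_of_lt_card_add (hnc : NoCloning Γ) (hle : ∀ B, Γ B → k ≤ #B)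
    (hA : n < #A + k) : Γ A := by
  refine (hnc A).2 fun hAc => ?_
  have hcompl : k ≤ #Aᶜ := hle _ hAc
  have hsum : #A + #Aᶜ = n := by simpa only [Fintype.card_fin] using card_add_card_compl A
  lia

theorem isMinimal_iff_card_eq_of_forall_iff_le_card (hΓ : ∀ B, Γ B ↔ k ≤ #B) :
    IsMinimal Γ A ↔ #A = k := by
  constructor
  · rintro ⟨hA, hsmaller⟩
    obtain ⟨B, hBA, hB⟩ := exists_subset_card_eq ((hΓ A).1 hA)
    have hBA_eq : B = A := hBA.eq_or_ssubset.resolve_right fun hlt =>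
      hsmaller B hlt ((hΓ B).2 hB.ge)
    rwa [← hBA_eq]
  · intro hA
    exact ⟨(hΓ A).2 hA.ge, fun B hBA hB =>
      (card_lt_card hBA).not_ge (hA.trans_le ((hΓ B).1 hB))⟩

end AccessStructure

theorem stmt1 (n : ℕ) (hn : 3 ≤ n) (hodd : Odd n) (Γ : Finset (Fin n) → Prop)
    (hmono : Monotonic Γ) (hnc : NoCloning Γ) (hnr : NoRedundancy Γ)
    (hmin : IsLeast {k : ℕ | ∃ A : Finset (Fin n), IsMinimal Γ A ∧ A.card = k} ((n + 1) / 2)) :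
    ∀ A : Finset (Fin n), IsMinimal Γ A ↔ A.card = (n + 1) / 2 := by
  have hle : ∀ A, Γ A → (n + 1) / 2 ≤ #A := fun A =>
    le_card_of_forall_isMinimal_le_card fun B hB => hmin.2 ⟨B, hB, rfl⟩
  have hthreshold : ∀ A, Γ A ↔ (n + 1) / 2 ≤ #A := fun A => by
    refine ⟨hle A, fun hA => hnc.authorized_of_lt_card_add hle ?_⟩
    obtain ⟨m, rfl⟩ := hodd
    lia
  exact fun A => isMinimal_iff_card_eq_of_forall_iff_le_card hthreshold
end

section
/- Let n ≥ 5, let Γ be a 3-homogeneous access structure on n players satisfying monotonicity, no-cloning and no-redundancy, and let ψ be a pure QSS state for Γ. Then the (n+1)-qubit state ψ is 2-uniform: for every subset A of its qubit positions with |A| ≤ 2, the reduction of ψ to A is maximally mixed. -/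
open Finset

/-!
Adjoining a qubit `x` changes the entropy of a set `B` by at most `log 2`, and
`S(xB) = S(B) + log 2` forces `ρ_{xB} = ½ I ⊗ ρ_B`; call `x` decoupled from `B` in this case. Both
facts come from Jensen's inequality for `negMulLog` and its equality case, applied to the diagonal
of `ρ_{xB}` in a product basis that diagonalizes `ρ_B`; since `ψ` is pure, complementary sets have
equal entropy, which gives the lower bound.

If `B` is unauthorized and `B ∪ {i}` is authorized, secrecy and recoverability make
`S(B) - S(R ∪ B)` grow by `2 log 2` when `i` joins. Each of the two entropies changes by at most
`log 2`, so both bounds are attained and `i` is decoupled from `B`; secrecy likewise decouples `R`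
from `B`. No-cloning shows that the complement of `B ∪ {i}` is again such a set for `i`, so every
player other than `i` lies in one of the two. Decoupling passes to subsets of `B`, hence any two
positions are decoupled from each other, and maximal mixedness follows by adjoining the positions
one at a time.
-/

open scoped ComplexOrder Kronecker
open Matrix

section Jensen

variable {ι : Type*} [Fintype ι]

section DoublyStochastic

variable [DecidableEq ι] {s : Set ℝ} {f : ℝ → ℝ} {M : Matrix ι ι ℝ} {x : ι → ℝ}

lemma sum_sum_mul_eq_sum_of_mem_doublyStochastic (hM : M ∈ doublyStochastic ℝ ι) (y : ι → ℝ) :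
    ∑ i, ∑ j, M i j * y j = ∑ j, y j := by
  simp only [Finset.sum_comm (γ := ι), ← Finset.sum_mul, sum_col_of_mem_doublyStochastic hM,
    one_mul]

lemma sum_mul_le_map_mulVec (hf : ConcaveOn ℝ s f) (hM : M ∈ doublyStochastic ℝ ι)
    (hx : ∀ i, x i ∈ s) (i : ι) : ∑ j, M i j * f (x j) ≤ f ((M *ᵥ x) i) :=
  hf.le_map_sum (fun _ _ => nonneg_of_mem_doublyStochastic hM)
    (sum_row_of_mem_doublyStochastic hM i) fun j _ => hx j

lemma sum_map_le_sum_map_mulVec (hf : ConcaveOn ℝ s f) (hM : M ∈ doublyStochastic ℝ ι)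
    (hx : ∀ i, x i ∈ s) : ∑ i, f (x i) ≤ ∑ i, f ((M *ᵥ x) i) := by
  rw [← sum_sum_mul_eq_sum_of_mem_doublyStochastic hM]
  exact Finset.sum_le_sum fun i _ => sum_mul_le_map_mulVec hf hM hx i

lemma eq_mulVec_of_sum_map_eq (hf : StrictConcaveOn ℝ s f) (hM : M ∈ doublyStochastic ℝ ι)
    (hx : ∀ i, x i ∈ s) (heq : ∑ i, f (x i) = ∑ i, f ((M *ᵥ x) i)) {i j : ι} (hij : M i j ≠ 0) :
    x j = (M *ᵥ x) i := by
  rw [← sum_sum_mul_eq_sum_of_mem_doublyStochastic hM,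
    Finset.sum_eq_sum_iff_of_le fun i _ => sum_mul_le_map_mulVec hf.concaveOn hM hx i] at heq
  exact (hf.map_sum_eq_iff' (fun _ _ => nonneg_of_mem_doublyStochastic hM)
    (sum_row_of_mem_doublyStochastic hM i) fun j _ => hx j).1 (heq i (mem_univ i)).symm j
    (mem_univ j) hij

end DoublyStochastic

lemma negMulLog_sum_inv_card_smul (x : ι → ℝ) :
    Real.negMulLog (∑ i, (Fintype.card ι : ℝ)⁻¹ • x i) =
      (Fintype.card ι : ℝ)⁻¹ *
        (Real.negMulLog (∑ i, x i) + (∑ i, x i) * Real.log (Fintype.card ι)) := by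
  rw [← Finset.smul_sum, smul_eq_mul, mul_comm, Real.negMulLog_mul,
    Real.negMulLog.eq_def (_⁻¹), Real.log_inv]
  ring

variable [Nonempty ι] {x : ι → ℝ}

lemma sum_negMulLog_le (hx : ∀ i, 0 ≤ x i) :
    ∑ i, Real.negMulLog (x i) ≤
      Real.negMulLog (∑ i, x i) + (∑ i, x i) * Real.log (Fintype.card ι) := by
  have jensen := Real.concaveOn_negMulLog.le_map_sum (t := univ) (p := x)
    (w := fun _ => (Fintype.card ι : ℝ)⁻¹) (fun _ _ => by positivity) (by simp) fun i _ => hx i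
  rw [negMulLog_sum_inv_card_smul, ← Finset.smul_sum, smul_eq_mul] at jensen
  exact le_of_mul_le_mul_left jensen (by positivity)

lemma eq_sum_div_card_of_sum_negMulLog_eq (hx : ∀ i, 0 ≤ x i)
    (heq : ∑ i, Real.negMulLog (x i) =
      Real.negMulLog (∑ i, x i) + (∑ i, x i) * Real.log (Fintype.card ι)) (i : ι) :
    x i = (∑ j, x j) / Fintype.card ι := by
  have jensen_eq := (Real.strictConcaveOn_negMulLog.map_sum_eq_iff' (t := univ) (p := x)
    (w := fun _ => (Fintype.card ι : ℝ)⁻¹) (fun _ _ => by positivity) (by simp) fun i _ => hx i).1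
    (by rw [negMulLog_sum_inv_card_smul, ← heq, ← Finset.smul_sum, smul_eq_mul])
  rw [jensen_eq i (mem_univ i) (by positivity), ← Finset.smul_sum, smul_eq_mul, div_eq_inv_mul]

end Jensen

section VonNeumannEntropy

variable {ι κ : Type} [Fintype ι] [DecidableEq ι] [Fintype κ] [DecidableEq κ]

lemma vnEntropy_eq_sum_negMulLog_eigenvalues {ρ : Matrix ι ι ℂ} (h : ρ.IsHermitian) :
    vnEntropy ρ = ∑ i, Real.negMulLog (h.eigenvalues i) := by
  rw [vnEntropy, dif_pos h]

lemma vnEntropy_eq_sum_roots_charpoly {ρ : Matrix ι ι ℂ} (h : ρ.IsHermitian) :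
    vnEntropy ρ = (ρ.charpoly.roots.map fun z => Real.negMulLog z.re).sum := by
  rw [vnEntropy_eq_sum_negMulLog_eigenvalues h, h.roots_charpoly_eq_eigenvalues, Multiset.map_map]
  rfl

lemma vnEntropy_eq_of_charpoly_eq {ρ : Matrix ι ι ℂ} {σ : Matrix κ κ ℂ} (hρ : ρ.IsHermitian)
    (hσ : σ.IsHermitian) (h : ρ.charpoly = σ.charpoly) : vnEntropy ρ = vnEntropy σ := by
  rw [vnEntropy_eq_sum_roots_charpoly hρ, vnEntropy_eq_sum_roots_charpoly hσ, h]

lemma vnEntropy_one : vnEntropy (1 : Matrix ι ι ℂ) = 0 := by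
  have roots_X_sub_one : (Polynomial.X - 1 : Polynomial ℂ).roots = {1} := by
    simpa using Polynomial.roots_X_sub_C (1 : ℂ)
  simp [vnEntropy_eq_sum_roots_charpoly isHermitian_one, charpoly_one, roots_X_sub_one,
    Multiset.map_nsmul, Multiset.sum_nsmul]

lemma vnEntropy_transpose {ρ : Matrix ι ι ℂ} (h : ρ.IsHermitian) : vnEntropy ρᵀ = vnEntropy ρ :=
  vnEntropy_eq_of_charpoly_eq h.transpose h ρ.charpoly_transpose

lemma vnEntropy_reindex (e : ι ≃ κ) {ρ : Matrix ι ι ℂ} (h : ρ.IsHermitian) :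
    vnEntropy (reindex e e ρ) = vnEntropy ρ :=
  vnEntropy_eq_of_charpoly_eq (h.submatrix e.symm) h (charpoly_reindex e ρ)

lemma trace_unitary_conj {U σ : Matrix ι ι ℂ} (hU : U ∈ unitaryGroup ι ℂ) :
    (Uᴴ * σ * U).trace = σ.trace := by
  have mul_conjTranspose : U * Uᴴ = 1 := mem_unitaryGroup_iff.1 hU
  rw [trace_mul_comm, ← Matrix.mul_assoc, mul_conjTranspose, Matrix.one_mul]

lemma mul_unitary_conj_mul {U σ : Matrix ι ι ℂ} (hU : U ∈ unitaryGroup ι ℂ) :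
    U * (Uᴴ * σ * U) * Uᴴ = σ := by
  have mul_conjTranspose : U * Uᴴ = 1 := mem_unitaryGroup_iff.1 hU
  rw [Matrix.mul_assoc, Matrix.mul_assoc, mul_conjTranspose, Matrix.mul_one, ← Matrix.mul_assoc,
    mul_conjTranspose, Matrix.one_mul]

lemma vnEntropy_unitary_conj {U ρ : Matrix ι ι ℂ} (hU : U ∈ unitaryGroup ι ℂ)
    (h : ρ.IsHermitian) : vnEntropy (Uᴴ * ρ * U) = vnEntropy ρ := by
  have mul_conjTranspose : U * Uᴴ = 1 := mem_unitaryGroup_iff.1 hU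
  refine vnEntropy_eq_of_charpoly_eq (isHermitian_conjTranspose_mul_mul U h) h ?_
  rw [charpoly_mul_comm, ← Matrix.mul_assoc, mul_conjTranspose, Matrix.one_mul]

-- `M * Mᴴ` and `Mᴴ * M` have the same eigenvalues up to zeros, and `negMulLog 0 = 0`.
lemma vnEntropy_mul_conjTranspose (M : Matrix ι κ ℂ) :
    vnEntropy (M * Mᴴ) = vnEntropy (Mᴴ * M) := by
  rw [vnEntropy_eq_sum_roots_charpoly (isHermitian_mul_conjTranspose_self M),
    vnEntropy_eq_sum_roots_charpoly (isHermitian_conjTranspose_mul_self M)]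
  have roots_eq := congrArg Polynomial.roots (charpoly_mul_comm' M Mᴴ)
  rw [Polynomial.roots_mul (mul_ne_zero (by simp) (charpoly_monic _).ne_zero),
    Polynomial.roots_mul (mul_ne_zero (by simp) (charpoly_monic _).ne_zero)] at roots_eq
  simpa [Multiset.map_nsmul, Multiset.sum_nsmul] using
    congrArg (fun s => (s.map fun z : ℂ => Real.negMulLog z.re).sum) roots_eq

lemma map_normSq_mem_doublyStochastic {U : Matrix ι ι ℂ} (hU : U ∈ unitaryGroup ι ℂ) :
    U.map Complex.normSq ∈ doublyStochastic ℝ ι := by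
  refine mem_doublyStochastic_iff_sum.2 ⟨fun _ _ => Complex.normSq_nonneg _, fun i => ?_,
    fun j => ?_⟩
  · have row := congrFun₂ (mem_unitaryGroup_iff.1 hU) i i
    simp only [mul_apply, star_apply, one_apply_eq, Complex.star_def, Complex.mul_conj] at row
    exact_mod_cast row
  · have col := congrFun₂ (mem_unitaryGroup_iff'.1 hU) j j
    simp only [mul_apply, star_apply, one_apply_eq, Complex.star_def,
      ← Complex.normSq_eq_conj_mul_self] at col
    exact_mod_cast col

lemma exists_unitary_eq_mul_diagonal_mul {ρ : Matrix ι ι ℂ} (h : ρ.IsHermitian) :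
    ∃ U ∈ unitaryGroup ι ℂ, ρ = U * diagonal (fun i => (h.eigenvalues i : ℂ)) * Uᴴ := by
  refine ⟨h.eigenvectorUnitary, h.eigenvectorUnitary.2, ?_⟩
  conv_lhs => rw [h.spectral_theorem, Unitary.conjStarAlgAut_apply]
  rfl

lemma exists_unitary_vnEntropy_eq_sum_negMulLog_diag {σ : Matrix ι ι ℂ} (h : σ.IsHermitian) :
    ∃ U ∈ unitaryGroup ι ℂ, vnEntropy σ = ∑ i, Real.negMulLog ((Uᴴ * σ * U) i i).re := by
  obtain ⟨U, hU, hσ⟩ := exists_unitary_eq_mul_diagonal_mul h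
  have conjTranspose_mul : Uᴴ * U = 1 := mem_unitaryGroup_iff'.1 hU
  have conj_eq : Uᴴ * σ * U = diagonal fun i => (h.eigenvalues i : ℂ) := by
    conv_lhs => rw [hσ]
    rw [← Matrix.mul_assoc, ← Matrix.mul_assoc, conjTranspose_mul, Matrix.one_mul,
      Matrix.mul_assoc, conjTranspose_mul, Matrix.mul_one]
  exact ⟨U, hU, by simp [vnEntropy_eq_sum_negMulLog_eigenvalues h, conj_eq]⟩

lemma re_diag_mul_diagonal_mul_conjTranspose (U : Matrix ι ι ℂ) (l : ι → ℝ) (i : ι) :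
    ((U * diagonal (fun j => (l j : ℂ)) * Uᴴ) i i).re = (U.map Complex.normSq *ᵥ l) i := by
  rw [mul_apply, Complex.re_sum]
  refine Finset.sum_congr rfl fun j _ => ?_
  rw [mul_diagonal, conjTranspose_apply, mul_right_comm, Complex.star_def, Complex.mul_conj]
  exact Complex.re_mul_ofReal _ _

lemma vnEntropy_le_sum_negMulLog_diag {ρ : Matrix ι ι ℂ} (h : ρ.PosSemidef) :
    vnEntropy ρ ≤ ∑ i, Real.negMulLog (ρ i i).re := by
  obtain ⟨U, hU, hρ⟩ := exists_unitary_eq_mul_diagonal_mul h.isHermitian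
  have re_diag (i : ι) : (ρ i i).re = (U.map Complex.normSq *ᵥ h.isHermitian.eigenvalues) i := by
    rw [← re_diag_mul_diagonal_mul_conjTranspose, ← hρ]
  simp only [vnEntropy_eq_sum_negMulLog_eigenvalues h.isHermitian, re_diag]
  exact sum_map_le_sum_map_mulVec Real.concaveOn_negMulLog (map_normSq_mem_doublyStochastic hU)
    h.eigenvalues_nonneg

lemma eq_diagonal_of_vnEntropy_eq {ρ : Matrix ι ι ℂ} (h : ρ.PosSemidef)
    (heq : vnEntropy ρ = ∑ i, Real.negMulLog (ρ i i).re) :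
    ρ = diagonal fun i => ((ρ i i).re : ℂ) := by
  obtain ⟨U, hU, hρ⟩ := exists_unitary_eq_mul_diagonal_mul h.isHermitian
  set l := h.isHermitian.eigenvalues
  have re_diag (i : ι) : (ρ i i).re = (U.map Complex.normSq *ᵥ l) i := by
    rw [← re_diag_mul_diagonal_mul_conjTranspose, ← hρ]
  have eigenvalue_eq {i j : ι} (hij : U i j ≠ 0) : l j = (ρ i i).re := by
    simp only [vnEntropy_eq_sum_negMulLog_eigenvalues h.isHermitian, re_diag] at heq
    rw [re_diag]
    exact eq_mulVec_of_sum_map_eq Real.strictConcaveOn_negMulLog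
      (map_normSq_mem_doublyStochastic hU) h.eigenvalues_nonneg heq (by simpa using hij)
  have mul_diagonal_comm : U * diagonal (fun j => (l j : ℂ)) =
      diagonal (fun i => ((ρ i i).re : ℂ)) * U := by
    ext i j
    rw [mul_diagonal, diagonal_mul]
    by_cases hij : U i j = 0
    · simp [hij]
    · rw [eigenvalue_eq hij, mul_comm]
  have mul_conjTranspose : U * Uᴴ = 1 := mem_unitaryGroup_iff.1 hU
  calc ρ = U * diagonal (fun j => (l j : ℂ)) * Uᴴ := hρ
    _ = diagonal (fun i => ((ρ i i).re : ℂ)) := by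
      rw [mul_diagonal_comm, Matrix.mul_assoc, mul_conjTranspose, Matrix.mul_one]

end VonNeumannEntropy

section PartialTrace

section Semiring

variable {α ι R : Type*} [Fintype α]

/-- The partial trace of a matrix on a tensor product over its left factor. -/
def traceLeft [AddCommMonoid R] (ρ : Matrix (α × ι) (α × ι) R) : Matrix ι ι R :=
  of fun u v => ∑ a, ρ (a, u) (a, v)

lemma isHermitian_traceLeft [AddCommMonoid R] [StarAddMonoid R] {ρ : Matrix (α × ι) (α × ι) R}
    (h : ρ.IsHermitian) : (traceLeft ρ).IsHermitian := by
  ext u v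
  simp only [traceLeft, conjTranspose_apply, of_apply, star_sum, h.apply]

lemma traceLeft_diagonal [DecidableEq α] [DecidableEq ι] [AddCommMonoid R] (d : α × ι → R) :
    traceLeft (diagonal d) = diagonal fun u => ∑ a, d (a, u) := by
  ext u v
  by_cases huv : u = v <;> simp [traceLeft, diagonal_apply, huv]

lemma traceLeft_one_kronecker_mul_mul [DecidableEq α] [Fintype ι] [Semiring R] (M N : Matrix ι ι R)
    (ρ : Matrix (α × ι) (α × ι) R) :
    traceLeft ((1 : Matrix α α R) ⊗ₖ M * ρ * (1 : Matrix α α R) ⊗ₖ N) = M * traceLeft ρ * N := by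
  ext u v
  simp only [traceLeft, of_apply, mul_apply, Fintype.sum_prod_type, kroneckerMap_apply, one_apply,
    ite_mul, mul_ite, one_mul, zero_mul, mul_zero, Finset.sum_mul, Finset.mul_sum,
    Finset.sum_ite_irrel, Finset.sum_const_zero, Finset.sum_ite_eq, Finset.sum_ite_eq', mem_univ,
    if_true]
  rw [Finset.sum_comm]
  exact Finset.sum_congr rfl fun j _ => Finset.sum_comm

end Semiring

variable {α ι : Type} [Fintype α] {ρ : Matrix (α × ι) (α × ι) ℂ}

lemma sum_negMulLog_diag_le [Nonempty α] (h : ρ.PosSemidef) (u : ι) :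
    ∑ a, Real.negMulLog (ρ (a, u) (a, u)).re ≤ Real.negMulLog (traceLeft ρ u u).re +
      (traceLeft ρ u u).re * Real.log (Fintype.card α) := by
  simp only [traceLeft, of_apply, Complex.re_sum]
  exact sum_negMulLog_le fun a => (Complex.nonneg_iff.1 h.diag_nonneg).1

lemma re_diag_eq_div_card_of_sum_negMulLog_eq [Nonempty α] (h : ρ.PosSemidef) {u : ι}
    (heq : ∑ a, Real.negMulLog (ρ (a, u) (a, u)).re = Real.negMulLog (traceLeft ρ u u).re +
      (traceLeft ρ u u).re * Real.log (Fintype.card α)) (a : α) :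
    (ρ (a, u) (a, u)).re = (traceLeft ρ u u).re / Fintype.card α := by
  simp only [traceLeft, of_apply, Complex.re_sum] at heq ⊢
  exact eq_sum_div_card_of_sum_negMulLog_eq (fun a => (Complex.nonneg_iff.1 h.diag_nonneg).1) heq a

lemma diagonal_eq_inv_card_smul_one_kronecker [DecidableEq α] [DecidableEq ι] {d : α × ι → ℂ}
    (hd : ∀ a u, d (a, u) = (∑ b, d (b, u)) / Fintype.card α) :
    diagonal d = (Fintype.card α : ℂ)⁻¹ • (1 : Matrix α α ℂ) ⊗ₖ traceLeft (diagonal d) := by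
  rw [traceLeft_diagonal]
  ext ⟨a, u⟩ ⟨b, v⟩
  by_cases hab : a = b <;> by_cases huv : u = v
  · simp only [← hab, ← huv, hd a u, diagonal_apply_eq, Matrix.smul_apply, kroneckerMap_apply,
      one_apply_eq, one_mul, smul_eq_mul, div_eq_inv_mul]
  all_goals simp [hab, huv]

variable [Fintype ι]

lemma sum_negMulLog_diag_traceLeft_add (ρ : Matrix (α × ι) (α × ι) ℂ) :
    ∑ u, Real.negMulLog (traceLeft ρ u u).re + ρ.trace.re * Real.log (Fintype.card α) =
      ∑ u, (Real.negMulLog (traceLeft ρ u u).re +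
        (traceLeft ρ u u).re * Real.log (Fintype.card α)) := by
  simp only [Finset.sum_add_distrib, ← Finset.sum_mul, trace, diag_apply, traceLeft, of_apply,
    Fintype.sum_prod_type_right, Complex.re_sum]

lemma traceLeft_one_kronecker_conj [DecidableEq α] (U : Matrix ι ι ℂ)
    (ρ : Matrix (α × ι) (α × ι) ℂ) :
    traceLeft (((1 : Matrix α α ℂ) ⊗ₖ U)ᴴ * ρ * (1 : Matrix α α ℂ) ⊗ₖ U) =
      Uᴴ * traceLeft ρ * U := by
  rw [conjTranspose_kronecker, conjTranspose_one, traceLeft_one_kronecker_mul_mul]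

variable [DecidableEq α] [DecidableEq ι]

section Nonempty

variable [Nonempty α]

lemma vnEntropy_le_sum_negMulLog_diag_traceLeft (h : ρ.PosSemidef) :
    vnEntropy ρ ≤
      ∑ u, Real.negMulLog (traceLeft ρ u u).re + ρ.trace.re * Real.log (Fintype.card α) := by
  rw [sum_negMulLog_diag_traceLeft_add]
  calc vnEntropy ρ ≤ ∑ p, Real.negMulLog (ρ p p).re := vnEntropy_le_sum_negMulLog_diag h
    _ = ∑ u, ∑ a, Real.negMulLog (ρ (a, u) (a, u)).re := Fintype.sum_prod_type_right _
    _ ≤ _ := Finset.sum_le_sum fun u _ => sum_negMulLog_diag_le h u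

lemma eq_one_kronecker_traceLeft_of_vnEntropy_eq_diag (h : ρ.PosSemidef)
    (heq : vnEntropy ρ =
      ∑ u, Real.negMulLog (traceLeft ρ u u).re + ρ.trace.re * Real.log (Fintype.card α)) :
    ρ = (Fintype.card α : ℂ)⁻¹ • (1 : Matrix α α ℂ) ⊗ₖ traceLeft ρ := by
  have entropy_le := vnEntropy_le_sum_negMulLog_diag h
  have sum_le := Finset.sum_le_sum fun u (_ : u ∈ univ) => sum_negMulLog_diag_le h u
  rw [sum_negMulLog_diag_traceLeft_add] at heq
  rw [← Fintype.sum_prod_type_right fun p => Real.negMulLog (ρ p p).re] at sum_le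
  have entropy_eq := entropy_le.antisymm (heq ▸ sum_le)
  have sum_eq (u : ι) := (Finset.sum_eq_sum_iff_of_le fun u _ => sum_negMulLog_diag_le h u).1
    (by rw [← heq, entropy_eq, Fintype.sum_prod_type_right]) u (mem_univ u)
  rw [eq_diagonal_of_vnEntropy_eq h entropy_eq]
  refine diagonal_eq_inv_card_smul_one_kronecker fun a u => ?_
  rw [re_diag_eq_div_card_of_sum_negMulLog_eq h (sum_eq u)]
  simp [traceLeft]

end Nonempty

lemma one_kronecker_mem_unitaryGroup {U : Matrix ι ι ℂ} (hU : U ∈ unitaryGroup ι ℂ) :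
    (1 : Matrix α α ℂ) ⊗ₖ U ∈ unitaryGroup (α × ι) ℂ :=
  kronecker_mem_unitary (one_mem (unitaryGroup α ℂ)) hU

lemma eq_smul_one_kronecker_of_unitary_conj {U σ : Matrix ι ι ℂ} (hU : U ∈ unitaryGroup ι ℂ) {c : ℂ}
    (h : ((1 : Matrix α α ℂ) ⊗ₖ U)ᴴ * ρ * (1 : Matrix α α ℂ) ⊗ₖ U =
      c • (1 : Matrix α α ℂ) ⊗ₖ (Uᴴ * σ * U)) :
    ρ = c • (1 : Matrix α α ℂ) ⊗ₖ σ := by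
  rw [← mul_unitary_conj_mul (σ := ρ) (one_kronecker_mem_unitaryGroup hU), h,
    conjTranspose_kronecker, conjTranspose_one, Matrix.mul_smul, Matrix.smul_mul,
    ← mul_kronecker_mul, ← mul_kronecker_mul, Matrix.one_mul, Matrix.one_mul,
    mul_unitary_conj_mul hU]

variable [Nonempty α]

theorem vnEntropy_le_vnEntropy_traceLeft_add (h : ρ.PosSemidef) :
    vnEntropy ρ ≤ vnEntropy (traceLeft ρ) + ρ.trace.re * Real.log (Fintype.card α) := by
  obtain ⟨U, hU, entropy_eq⟩ :=
    exists_unitary_vnEntropy_eq_sum_negMulLog_diag (isHermitian_traceLeft h.isHermitian)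
  have hV := one_kronecker_mem_unitaryGroup (α := α) hU
  rw [entropy_eq, ← traceLeft_one_kronecker_conj, ← vnEntropy_unitary_conj hV h.isHermitian,
    ← trace_unitary_conj hV]
  exact vnEntropy_le_sum_negMulLog_diag_traceLeft (h.conjTranspose_mul_mul_same _)

theorem eq_one_kronecker_traceLeft_of_vnEntropy_eq (h : ρ.PosSemidef)
    (heq : vnEntropy ρ = vnEntropy (traceLeft ρ) + ρ.trace.re * Real.log (Fintype.card α)) :
    ρ = (Fintype.card α : ℂ)⁻¹ • (1 : Matrix α α ℂ) ⊗ₖ traceLeft ρ := by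
  obtain ⟨U, hU, entropy_eq⟩ :=
    exists_unitary_vnEntropy_eq_sum_negMulLog_diag (isHermitian_traceLeft h.isHermitian)
  have hV := one_kronecker_mem_unitaryGroup (α := α) hU
  rw [entropy_eq, ← traceLeft_one_kronecker_conj, ← vnEntropy_unitary_conj hV h.isHermitian,
    ← trace_unitary_conj hV] at heq
  have conj_eq := eq_one_kronecker_traceLeft_of_vnEntropy_eq_diag
    (h.conjTranspose_mul_mul_same _) heq
  rw [traceLeft_one_kronecker_conj] at conj_eq
  exact eq_smul_one_kronecker_of_unitary_conj hU conj_eq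

end PartialTrace

section ReducedDensity

variable {m : ℕ}

lemma restrict_glue (A : Finset (Fin m)) (u : {x // x ∈ A} → Fin 2) (w : {x // x ∈ Aᶜ} → Fin 2) :
    A.restrict (glue A u w) = u := by
  ext x
  simp [glue]

lemma restrict_compl_glue (A : Finset (Fin m)) (u : {x // x ∈ A} → Fin 2)
    (w : {x // x ∈ Aᶜ} → Fin 2) : Aᶜ.restrict (glue A u w) = w := by
  ext x
  simp [glue, Finset.mem_compl.1 x.2]

lemma glue_restrict (A : Finset (Fin m)) (z y : Fin m → Fin 2) :
    glue A (A.restrict z) (Aᶜ.restrict y) = A.piecewise z y := by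
  ext x
  by_cases hx : x ∈ A <;> simp [glue, hx]

/-- `glue` as an equivalence between pairs of partial bit strings and full ones, used to sum over
the two parts separately. -/
def glueEquiv (A : Finset (Fin m)) :
    ({x // x ∈ A} → Fin 2) × ({x // x ∈ Aᶜ} → Fin 2) ≃ (Fin m → Fin 2) where
  toFun p := glue A p.1 p.2
  invFun z := (A.restrict z, Aᶜ.restrict z)
  left_inv p := Prod.ext (restrict_glue A p.1 p.2) (restrict_compl_glue A p.1 p.2)
  right_inv z := (glue_restrict A z z).trans (A.piecewise_same z)

/-- A bit string on `insert x B` as its bit at `x` together with its restriction to `B`. In the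
inverse, the filler `0` outside `B` is never read. -/
def insertEquiv {x : Fin m} {B : Finset (Fin m)} (hx : x ∉ B) :
    ({y // y ∈ insert x B} → Fin 2) ≃ Fin 2 × ({y // y ∈ B} → Fin 2) where
  toFun u := (u ⟨x, mem_insert_self x B⟩, fun y => u ⟨y, mem_insert_of_mem y.2⟩)
  invFun p := (insert x B).restrict (Function.update (glue B p.2 0) x p.1)
  left_inv u := by
    ext ⟨y, hy⟩
    rcases Finset.mem_insert.1 hy with rfl | hyB
    · simp
    · simp [glue, hyB, ne_of_mem_of_not_mem hyB hx]
  right_inv p := by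
    refine Prod.ext (by simp) ?_
    ext y
    simp [glue, ne_of_mem_of_not_mem y.2 hx]

variable (ψ : (Fin m → Fin 2) → ℂ)

/-- The matrix `u, w ↦ ψ(u ∪ w)` of amplitudes of `ψ` across the cut `A | Aᶜ`. -/
def amplitudeMatrix (A : Finset (Fin m)) :
    Matrix ({x // x ∈ A} → Fin 2) ({x // x ∈ Aᶜ} → Fin 2) ℂ :=
  of fun u w => ψ (glue A u w)

lemma reducedDensity_eq_mul_conjTranspose (A : Finset (Fin m)) :
    reducedDensity ψ A = amplitudeMatrix ψ A * (amplitudeMatrix ψ A)ᴴ := by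
  ext u v
  simp [reducedDensity, amplitudeMatrix, mul_apply]

lemma posSemidef_reducedDensity (A : Finset (Fin m)) : (reducedDensity ψ A).PosSemidef := by
  rw [reducedDensity_eq_mul_conjTranspose]
  exact posSemidef_self_mul_conjTranspose _

lemma trace_reducedDensity (A : Finset (Fin m)) :
    (reducedDensity ψ A).trace = ∑ z, (‖ψ z‖ ^ 2 : ℂ) := by
  rw [← (glueEquiv A).sum_comp, Fintype.sum_prod_type]
  simp [Complex.mul_conj', trace, reducedDensity, glueEquiv]

/-- The entry of the reduced density matrix on `A` at the restrictions to `A` of two bit strings,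
which lets reductions to different sets of positions share their indices. -/
def reducedKernel (A : Finset (Fin m)) (z z' : Fin m → Fin 2) : ℂ :=
  reducedDensity ψ A (A.restrict z) (A.restrict z')

lemma reducedDensity_eq_reducedKernel (A : Finset (Fin m)) (u v : {x // x ∈ A} → Fin 2) :
    reducedDensity ψ A u v = reducedKernel ψ A (glue A u 0) (glue A v 0) := by
  rw [reducedKernel, restrict_glue, restrict_glue]

lemma reducedKernel_eq_sum (A : Finset (Fin m)) (z z' : Fin m → Fin 2) :
    reducedKernel ψ A z z' = ∑ y, if A.restrict y = A.restrict z then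
      ψ y * (starRingEnd ℂ) (ψ (A.piecewise z' y)) else 0 := by
  rw [← (glueEquiv A).sum_comp, Fintype.sum_prod_type]
  simp [reducedKernel, reducedDensity, glueEquiv, ← glue_restrict, restrict_glue,
    restrict_compl_glue, Finset.sum_ite_irrel]

lemma restrict_insert_eq_restrict_update_iff {x : Fin m} {B : Finset (Fin m)} (hx : x ∉ B)
    (y z : Fin m → Fin 2) (a : Fin 2) :
    (insert x B).restrict y = (insert x B).restrict (Function.update z x a) ↔
      y x = a ∧ B.restrict y = B.restrict z := by
  simp only [funext_iff, Finset.restrict_def, Subtype.forall, Finset.forall_mem_insert,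
    Function.update_self]
  refine and_congr_right fun _ => forall₂_congr fun t ht => ?_
  rw [Function.update_of_ne (ne_of_mem_of_not_mem ht hx)]

lemma reducedKernel_eq_sum_insert {x : Fin m} {B : Finset (Fin m)} (hx : x ∉ B)
    (z z' : Fin m → Fin 2) :
    reducedKernel ψ B z z' =
      ∑ a, reducedKernel ψ (insert x B) (Function.update z x a) (Function.update z' x a) := by
  have piecewise_update (y : Fin m → Fin 2) :
      (insert x B).piecewise (Function.update z' x (y x)) y = B.piecewise z' y := by
    ext t
    by_cases htx : t = x
    · simp [htx, hx]
    · by_cases ht : t ∈ B <;> simp [htx, ht]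
  simp only [reducedKernel_eq_sum, restrict_insert_eq_restrict_update_iff hx]
  rw [Finset.sum_comm]
  simp [ite_and, piecewise_update]

/-- Bit strings on `A` as bit strings on `Aᶜᶜ`. -/
def complComplEquiv (A : Finset (Fin m)) :
    ({x // x ∈ A} → Fin 2) ≃ ({x // x ∈ Aᶜᶜ} → Fin 2) :=
  (Equiv.subtypeEquivRight fun x => by simp).arrowCongr (Equiv.refl _)

lemma glue_compl (A : Finset (Fin m)) (u : {x // x ∈ A} → Fin 2) (w : {x // x ∈ Aᶜ} → Fin 2) :
    glue Aᶜ w (complComplEquiv A u) = glue A u w := by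
  ext x
  by_cases hx : x ∈ A
  · simp only [glue, complComplEquiv, mem_compl, hx, not_true_eq_false, dif_pos, dif_neg,
      not_false_eq_true]
    rfl
  · simp [glue, hx]

lemma reducedDensity_compl (A : Finset (Fin m)) :
    reducedDensity ψ Aᶜ = ((amplitudeMatrix ψ A)ᴴ * amplitudeMatrix ψ A)ᵀ := by
  ext w w'
  simp [reducedDensity, amplitudeMatrix, mul_apply, ← (complComplEquiv A).sum_comp, glue_compl,
    mul_comm]

lemma Sent_compl (A : Finset (Fin m)) : Sent ψ Aᶜ = Sent ψ A := by
  rw [Sent, reducedDensity_compl, vnEntropy_transpose (isHermitian_conjTranspose_mul_self _),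
    ← vnEntropy_mul_conjTranspose, ← reducedDensity_eq_mul_conjTranspose, Sent]

variable {ψ} {x : Fin m} {B : Finset (Fin m)}

lemma trace_reducedDensity_eq_one (hψ : ∑ z, ‖ψ z‖ ^ 2 = 1) (A : Finset (Fin m)) :
    (reducedDensity ψ A).trace = 1 := by
  rw [trace_reducedDensity]
  exact_mod_cast hψ

lemma maximallyMixed_iff_reducedKernel {A : Finset (Fin m)} :
    MaximallyMixed ψ A ↔ ∀ z z', reducedKernel ψ A z z' =
      if A.restrict z = A.restrict z' then ((2 : ℂ) ^ A.card)⁻¹ else 0 := by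
  refine ⟨fun h z z' => ?_, fun h => ?_⟩
  · rw [reducedKernel, h]
    simp [one_apply]
  · ext u v
    rw [reducedDensity_eq_reducedKernel, h, restrict_glue, restrict_glue]
    simp [one_apply]

lemma maximallyMixed_empty (hψ : ∑ z, ‖ψ z‖ ^ 2 = 1) : MaximallyMixed ψ ∅ := by
  have trace_eq := trace_reducedDensity_eq_one hψ ∅
  ext u v
  rw [trace, Fintype.sum_subsingleton _ u] at trace_eq
  simpa [Subsingleton.elim v u] using trace_eq

lemma Sent_empty (hψ : ∑ z, ‖ψ z‖ ^ 2 = 1) : Sent ψ ∅ = 0 := by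
  rw [Sent, maximallyMixed_empty hψ]
  simp [vnEntropy_one]

/-- Qubit `x` is maximally mixed and uncorrelated with `B`, that is `ρ_{xB} = ½ I ⊗ ρ_B`
(meaningful for `x ∉ B`). -/
def Decoupled (ψ : (Fin m → Fin 2) → ℂ) (x : Fin m) (B : Finset (Fin m)) : Prop :=
  ∀ z z', reducedKernel ψ (insert x B) z z' = if z x = z' x then reducedKernel ψ B z z' / 2 else 0

lemma Decoupled.of_insert {y : Fin m} (h : Decoupled ψ x (insert y B)) (hyx : y ≠ x) :
    Decoupled ψ x B := by
  by_cases hy : y ∈ B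
  · rwa [insert_eq_of_mem hy] at h
  intro z z'
  rw [reducedKernel_eq_sum_insert ψ (x := y) (B := insert x B) (by simp [hyx, hy]),
    reducedKernel_eq_sum_insert ψ hy, Finset.insert_comm, Finset.sum_div]
  simp [h _ _, Function.update_of_ne hyx.symm]

lemma Decoupled.of_union {C : Finset (Fin m)} (h : Decoupled ψ x (C ∪ B)) (hx : x ∉ C) :
    Decoupled ψ x B := by
  induction C using Finset.induction_on with
  | empty => rwa [empty_union] at h
  | insert y C _ ih =>
    rw [insert_union] at h
    exact ih (h.of_insert fun hyx => hx (hyx ▸ mem_insert_self y C))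
      fun hxC => hx (mem_insert_of_mem hxC)

lemma Decoupled.mono {C : Finset (Fin m)} (h : Decoupled ψ x C) (hBC : B ⊆ C) (hx : x ∉ C) :
    Decoupled ψ x B := by
  rw [← union_eq_left.2 hBC] at h
  exact h.of_union hx

lemma Decoupled.maximallyMixed_insert (h : Decoupled ψ x B) (hx : x ∉ B)
    (hB : MaximallyMixed ψ B) : MaximallyMixed ψ (insert x B) := by
  rw [maximallyMixed_iff_reducedKernel] at hB ⊢
  intro z z'
  have restrict_insert_eq_iff : (insert x B).restrict z = (insert x B).restrict z' ↔
      z x = z' x ∧ B.restrict z = B.restrict z' := by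
    simpa using restrict_insert_eq_restrict_update_iff hx z z' (z' x)
  simp [h z z', hB z z', restrict_insert_eq_iff, ite_and, card_insert_of_notMem hx, pow_succ,
    div_eq_inv_mul]

lemma maximallyMixed_of_forall_decoupled {k : ℕ} (hψ : ∑ z, ‖ψ z‖ ^ 2 = 1)
    (h : ∀ x B, (∀ y ∈ B, x < y) → #B < k → Decoupled ψ x B) (A : Finset (Fin m)) (hA : #A ≤ k) :
    MaximallyMixed ψ A := by
  induction A using Finset.induction_on_min with
  | empty => exact maximallyMixed_empty hψ
  | insert x B hx ih =>
    have hxB : x ∉ B := fun hxB => (hx x hxB).false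
    rw [card_insert_of_notMem hxB] at hA
    exact (h x B hx hA).maximallyMixed_insert hxB (ih (Nat.le_of_succ_le hA))

/-- The reduced density matrix on `insert x B` as a matrix on the tensor product of the qubit `x`
with the qubits in `B`. -/
def splitDensity (ψ : (Fin m → Fin 2) → ℂ) (hx : x ∉ B) :
    Matrix (Fin 2 × ({y // y ∈ B} → Fin 2)) (Fin 2 × ({y // y ∈ B} → Fin 2)) ℂ :=
  reindex (insertEquiv hx) (insertEquiv hx) (reducedDensity ψ (insert x B))

lemma posSemidef_splitDensity (ψ : (Fin m → Fin 2) → ℂ) (hx : x ∉ B) :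
    (splitDensity ψ hx).PosSemidef :=
  (posSemidef_reducedDensity ψ (insert x B)).submatrix _

lemma trace_splitDensity (hψ : ∑ z, ‖ψ z‖ ^ 2 = 1) (hx : x ∉ B) :
    (splitDensity ψ hx).trace = 1 := by
  rw [← trace_reducedDensity_eq_one hψ (insert x B)]
  exact (insertEquiv hx).symm.sum_comp fun u => reducedDensity ψ (insert x B) u u

lemma traceLeft_splitDensity (ψ : (Fin m → Fin 2) → ℂ) (hx : x ∉ B) :
    traceLeft (splitDensity ψ hx) = reducedDensity ψ B := by
  ext u v
  rw [reducedDensity_eq_reducedKernel, reducedKernel_eq_sum_insert ψ hx]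
  rfl

lemma vnEntropy_splitDensity (ψ : (Fin m → Fin 2) → ℂ) (hx : x ∉ B) :
    vnEntropy (splitDensity ψ hx) = Sent ψ (insert x B) :=
  vnEntropy_reindex _ (posSemidef_reducedDensity ψ (insert x B)).isHermitian

lemma reducedKernel_insert_eq_splitDensity (ψ : (Fin m → Fin 2) → ℂ) (hx : x ∉ B)
    (z z' : Fin m → Fin 2) :
    reducedKernel ψ (insert x B) z z' =
      splitDensity ψ hx (z x, B.restrict z) (z' x, B.restrict z') := by
  have insertEquiv_restrict (z : Fin m → Fin 2) :
      insertEquiv hx ((insert x B).restrict z) = (z x, B.restrict z) := rfl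
  simp [splitDensity, reducedKernel, ← insertEquiv_restrict]

lemma Sent_insert_le (hψ : ∑ z, ‖ψ z‖ ^ 2 = 1) (hx : x ∉ B) :
    Sent ψ (insert x B) ≤ Sent ψ B + Real.log 2 := by
  simpa [vnEntropy_splitDensity, traceLeft_splitDensity, trace_splitDensity hψ, Sent] using
    vnEntropy_le_vnEntropy_traceLeft_add (posSemidef_splitDensity ψ hx)

lemma decoupled_of_Sent_insert_eq (hψ : ∑ z, ‖ψ z‖ ^ 2 = 1) (hx : x ∉ B)
    (heq : Sent ψ (insert x B) = Sent ψ B + Real.log 2) : Decoupled ψ x B := by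
  have split_eq := eq_one_kronecker_traceLeft_of_vnEntropy_eq (posSemidef_splitDensity ψ hx) <| by
    simpa [vnEntropy_splitDensity, traceLeft_splitDensity, trace_splitDensity hψ, Sent] using heq
  intro z z'
  rw [reducedKernel_insert_eq_splitDensity ψ hx, split_eq, traceLeft_splitDensity]
  simp [one_apply, reducedKernel, div_eq_inv_mul]

lemma Sent_le_Sent_insert_add (hψ : ∑ z, ‖ψ z‖ ^ 2 = 1) (hx : x ∉ B) :
    Sent ψ B ≤ Sent ψ (insert x B) + Real.log 2 := by
  have insert_compl_insert : insert x (insert x B)ᶜ = Bᶜ := by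
    rw [compl_insert, insert_erase (mem_compl.2 hx)]
  have entropy_le := Sent_insert_le (x := x) (B := (insert x B)ᶜ) hψ (by simp)
  rwa [insert_compl_insert, Sent_compl, Sent_compl] at entropy_le

end ReducedDensity

section AccessStructure

variable {n : ℕ} {Γ : Finset (Fin n) → Prop} {i : Fin n} {B : Finset (Fin n)}

/-- Player `i` is pivotal for `B`: joining `i` turns the unauthorized set `B` into an
authorized one (in particular `i ∉ B`). -/
def IsPivotal (Γ : Finset (Fin n) → Prop) (i : Fin n) (B : Finset (Fin n)) : Prop :=
  ¬ Γ B ∧ Γ (insert i B)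

lemma IsPivotal.notMem (h : IsPivotal Γ i B) : i ∉ B :=
  fun hi => h.1 (by simpa [hi] using h.2)

lemma IsPivotal.compl_insert (hnc : NoCloning Γ) (h : IsPivotal Γ i B) :
    IsPivotal Γ i (insert i B)ᶜ := by
  refine ⟨(hnc _).1 h.2, ?_⟩
  rw [Finset.compl_insert, insert_erase (mem_compl.2 h.notMem), hnc, compl_compl]
  exact h.1

lemma exists_isPivotal (hnr : NoRedundancy Γ) (i : Fin n) : ∃ B, IsPivotal Γ i B := by
  obtain ⟨A, hA, hi⟩ := hnr i
  exact ⟨A.erase i, hA.2 _ (erase_ssubset hi), by rw [insert_erase hi]; exact hA.1⟩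

lemma exists_isPivotal_mem (hnc : NoCloning Γ) (hnr : NoRedundancy Γ) {j : Fin n} (hji : j ≠ i) :
    ∃ B, j ∈ B ∧ IsPivotal Γ i B := by
  obtain ⟨B, hB⟩ := exists_isPivotal hnr i
  by_cases hj : j ∈ B
  · exact ⟨B, hj, hB⟩
  · exact ⟨(insert i B)ᶜ, by simp [hji, hj], hB.compl_insert hnc⟩

lemma exists_isPivotal_superset (hnc : NoCloning Γ) (hnr : NoRedundancy Γ)
    {C : Finset (Fin n)} (hC : #C ≤ 1) (hi : i ∉ C) : ∃ B, C ⊆ B ∧ IsPivotal Γ i B := by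
  rcases Nat.le_one_iff_eq_zero_or_eq_one.1 hC with hC | hC
  · obtain ⟨B, hB⟩ := exists_isPivotal hnr i
    exact ⟨B, by simp [card_eq_zero.1 hC], hB⟩
  · obtain ⟨j, rfl⟩ := card_eq_one.1 hC
    obtain ⟨B, hjB, hB⟩ := exists_isPivotal_mem hnc hnr (Ne.symm (notMem_singleton.1 hi))
    exact ⟨B, by simpa using hjB, hB⟩

end AccessStructure

section QSS

variable {n : ℕ} {Γ : Finset (Fin n) → Prop} {ψ : (Fin (n + 1) → Fin 2) → ℂ}
  {i : Fin n} {B : Finset (Fin n)}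

lemma zero_notMem_posOf (B : Finset (Fin n)) : (0 : Fin (n + 1)) ∉ posOf B := by
  simp [posOf]

lemma succ_mem_posOf : i.succ ∈ posOf B ↔ i ∈ B := by
  simp [posOf]

lemma posOf_insert (i : Fin n) (B : Finset (Fin n)) :
    posOf (insert i B) = insert i.succ (posOf B) :=
  image_insert _ _ _

lemma posOf_mono {B C : Finset (Fin n)} (h : B ⊆ C) : posOf B ⊆ posOf C :=
  image_subset_image h

lemma card_posOf (B : Finset (Fin n)) : #(posOf B) = #B :=
  card_image_of_injective B (Fin.succ_injective n)

lemma exists_posOf_eq {A : Finset (Fin (n + 1))} (hA : 0 ∉ A) : ∃ C, posOf C = A := by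
  refine ⟨({i : Fin n | i.succ ∈ A} : Finset (Fin n)), ?_⟩
  ext x
  cases x using Fin.cases <;> simp [posOf, hA]

lemma Sent_reference_eq (hψ : IsPureQSSState Γ ψ) {A : Finset (Fin n)} (hA : Γ A) :
    Sent ψ {0} = Real.log 2 := by
  have le_log := Sent_insert_le hψ.normalized (notMem_empty (0 : Fin (n + 1)))
  have := Sent_le_Sent_insert_add hψ.normalized (zero_notMem_posOf A)
  rw [insert_empty_eq, Sent_empty hψ.normalized] at le_log
  linarith [hψ.recover A hA]

lemma decoupled_zero (hψ : IsPureQSSState Γ ψ) (hB : ¬ Γ B) {A : Finset (Fin n)} (hA : Γ A) :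
    Decoupled ψ 0 (posOf B) :=
  decoupled_of_Sent_insert_eq hψ.normalized (zero_notMem_posOf B) <| by
    linarith [hψ.secrecy B hB, Sent_reference_eq hψ hA]

lemma IsPivotal.decoupled_succ (h : IsPivotal Γ i B) (hψ : IsPureQSSState Γ ψ) :
    Decoupled ψ i.succ (posOf B) := by
  have hi : i.succ ∉ posOf B := succ_mem_posOf.not.2 h.notMem
  have recover := hψ.recover _ h.2
  have secrecy := hψ.secrecy _ h.1
  have insert_le := Sent_insert_le hψ.normalized hi
  have le_insert := Sent_le_Sent_insert_add hψ.normalized (x := i.succ) (B := insert 0 (posOf B))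
    (by simp [hi])
  rw [posOf_insert, Finset.insert_comm] at recover
  exact decoupled_of_Sent_insert_eq hψ.normalized hi (by linarith)

variable {C : Finset (Fin n)}

lemma decoupled_succ_of_card_le_one (hnc : NoCloning Γ) (hnr : NoRedundancy Γ)
    (hψ : IsPureQSSState Γ ψ) (hC : #C ≤ 1) (hi : i ∉ C) : Decoupled ψ i.succ (posOf C) := by
  obtain ⟨B, hCB, hB⟩ := exists_isPivotal_superset hnc hnr hC hi
  exact (hB.decoupled_succ hψ).mono (posOf_mono hCB) (succ_mem_posOf.not.2 hB.notMem)

lemma decoupled_zero_of_card_le_one (hn : 2 ≤ n) (hnc : NoCloning Γ) (hnr : NoRedundancy Γ)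
    (hψ : IsPureQSSState Γ ψ) (hC : #C ≤ 1) : Decoupled ψ 0 (posOf C) := by
  obtain ⟨i, hi⟩ : ∃ i, i ∉ C := by
    by_contra! mem_C
    have card_eq : #C = n := by simp [eq_univ_of_forall mem_C]
    omega
  obtain ⟨B, hCB, hB⟩ := exists_isPivotal_superset hnc hnr hC hi
  exact (decoupled_zero hψ hB.1 hB.2).mono (posOf_mono hCB) (zero_notMem_posOf B)

end QSS

theorem stmt7_general (n : ℕ) (hn : 2 ≤ n) (Γ : Finset (Fin n) → Prop) (hnc : NoCloning Γ)
    (hnr : NoRedundancy Γ) (ψ : (Fin (n + 1) → Fin 2) → ℂ) (hψ : IsPureQSSState Γ ψ) :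
    ∀ A : Finset (Fin (n + 1)), A.card ≤ 2 → MaximallyMixed ψ A := by
  refine maximallyMixed_of_forall_decoupled hψ.normalized fun x B hx hB => ?_
  obtain ⟨C, rfl⟩ := exists_posOf_eq fun h0 : 0 ∈ B => (Fin.zero_le x).not_gt (hx 0 h0)
  have hC : #C ≤ 1 := by rw [← card_posOf]; omega
  cases x using Fin.cases with
  | zero => exact decoupled_zero_of_card_le_one hn hnc hnr hψ hC
  | succ i =>
    have hi : i ∉ C := fun hi => (hx _ (succ_mem_posOf.2 hi)).false
    exact decoupled_succ_of_card_le_one hnc hnr hψ hC hi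

theorem stmt7 (n : ℕ) (hn : 5 ≤ n) (Γ : Finset (Fin n) → Prop)
    (hmono : Monotonic Γ) (hnc : NoCloning Γ) (hnr : NoRedundancy Γ)
    (hhom : ∀ A : Finset (Fin n), IsMinimal Γ A → A.card = 3)
    (ψ : (Fin (n + 1) → Fin 2) → ℂ) (hψ : IsPureQSSState Γ ψ) :
    ∀ A : Finset (Fin (n + 1)), A.card ≤ 2 → MaximallyMixed ψ A :=
  stmt7_general n (by omega) Γ hnc hnr ψ hψ
end
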